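/- For every u ≥ 1 and every ε > 0 there is a constant C = C(u, ε) such that every sequence m : ℕ → ℂ with ‖m‖_{V_u} < ∞ belongs to R_{u+ε} with ‖m‖_{R_{u+ε}} ≤ C ‖m‖_{V_u}; in particular the embedding V_u ⊆ R_{u+ε} is continuous. -/

import Mathlib

open scoped ENNReal

/-- The `u`-variation `𝒱_u(m)` of a sequence `m : ℕ → ℂ`, as a value in `[0,∞]`. -/
noncomputable def eVar (u : ℝ) (m : ℕ → ℂ) : ℝ≥0∞ :=
  ⨆ (N : ℕ) (j : Fin (N + 1) → ℕ) (_ : StrictMono j),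
    (∑ i : Fin N, (ENNReal.ofReal ‖m (j i.succ) - m (j i.castSucc)‖) ^ u) ^ (1 / u)

/-- The `V_u` norm `‖m‖_{V_u} = sup_j |m j| + 𝒱_u(m)`, as a value in `[0,∞]`. -/
noncomputable def eVnorm (u : ℝ) (m : ℕ → ℂ) : ℝ≥0∞ :=
  (⨆ j : ℕ, ENNReal.ofReal ‖m j‖) + eVar u m

/-- `g ∈ r_u`: `g = Σ_ν a_ν 1_{I_ν}` for a countable family of pairwise disjoint
order-convex subsets (intervals) `I_ν` of `ℕ` and coefficients with
`(Σ_ν |a_ν|^u)^(1/u) ≤ 1`. -/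
def memru (u : ℝ) (g : ℕ → ℂ) : Prop :=
  ∃ (I : ℕ → Set ℕ) (a : ℕ → ℂ),
    (∀ ν, (I ν).OrdConnected) ∧ Pairwise (Function.onFun Disjoint I) ∧
    Summable (fun ν => ‖a ν‖ ^ u) ∧ (∑' ν : ℕ, ‖a ν‖ ^ u) ^ (1 / u) ≤ 1 ∧
    ∀ n, g n = ∑' ν : ℕ, (I ν).indicator (fun _ => a ν) n

/-- An `R_u`-representation of `m`: `m = Σ_l c_l g_l` pointwise, with `g_l ∈ r_u`
and `Σ_l |c_l| < ∞`. -/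
def RuRep (u : ℝ) (m : ℕ → ℂ) (c : ℕ → ℂ) (g : ℕ → ℕ → ℂ) : Prop :=
  (∀ l, memru u (g l)) ∧ Summable (fun l => ‖c l‖) ∧
  ∀ n, HasSum (fun l => c l * g l n) (m n)

/-- `‖m‖_{R_u}`: the infimum of `Σ_l |c_l|` over all `R_u`-representations of `m`,
as a value in `[0,∞]` (equal to `∞` if no representation exists). -/
noncomputable def RuNorm (u : ℝ) (m : ℕ → ℂ) : ℝ≥0∞ :=
  ⨅ (c : ℕ → ℂ) (g : ℕ → ℕ → ℂ) (_ : RuRep u m c g), ENNReal.ofReal (∑' l : ℕ, ‖c l‖)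

/-!
A sequence of bounded `u`-variation is a `1/u`-Hölder function of the normalised variation
`w : ℕ → [0, 1]` accumulated along it. Freezing the sequence on the sets where `⌊2 ^ l * w⌋` is
constant changes it by `O(2 ^ (-l/u))`, so the successive differences of these approximations are
step functions with at most `2 ^ (l + 1)` intervals and height `O(2 ^ (-l/u))`. Such a function is
`O(2 ^ (l/v - l/u))` times an element of `r_v`, and the resulting series converges geometrically
when `u < v`.
-/

open Filter Topology

section StepFunctions

lemma memru_of_factorsThrough {v δ : ℝ} {N : ℕ} {F : ℕ → ℕ} {g : ℕ → ℂ} (hv : 0 < v)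
    (hF : Monotone F) (hFN : ∀ n, F n < N) (hgF : g.FactorsThrough F)
    (hg : ∀ n, ‖g n‖ ≤ δ) (hδ : N * δ ^ v ≤ 1) : memru v g := by
  have hδ0 : 0 ≤ δ := (norm_nonneg _).trans (hg 0)
  let a : ℕ → ℂ := Function.extend F g 0
  have norm_a_le (i : ℕ) : ‖a i‖ ≤ δ := by
    by_cases hi : ∃ n, F n = i
    · obtain ⟨n, rfl⟩ := hi
      simpa only [a, hgF.extend_apply] using hg n
    · simpa only [a, Function.extend_apply' _ _ _ hi, Pi.zero_apply, norm_zero] using hδ0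
  have a_eq_zero (i : ℕ) (hi : i ∉ Finset.range N) : ‖a i‖ ^ v = 0 := by
    have hi' : ¬∃ n, F n = i := by
      rintro ⟨n, rfl⟩
      exact hi (Finset.mem_range.2 (hFN n))
    simp only [a, Function.extend_apply' _ _ _ hi', Pi.zero_apply, norm_zero,
      Real.zero_rpow hv.ne']
  refine ⟨fun i => F ⁻¹' {i}, a, fun i => Set.ordConnected_singleton.preimage_mono hF,
    fun i j hij => (Set.disjoint_singleton.2 hij).preimage F,
    summable_of_ne_finset_zero a_eq_zero, ?_, fun n => ?_⟩
  · rw [tsum_eq_sum a_eq_zero]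
    refine Real.rpow_le_one (by positivity) ?_ (by positivity)
    calc ∑ i ∈ Finset.range N, ‖a i‖ ^ v
        ≤ ∑ _i ∈ Finset.range N, δ ^ v := by gcongr with i; exact norm_a_le i
      _ = N * δ ^ v := by rw [Finset.sum_const, Finset.card_range, nsmul_eq_mul]
      _ ≤ 1 := hδ
  · rw [tsum_eq_single (F n) fun i hi => Set.indicator_of_notMem (fun h => hi h.symm) _]
    exact ((Set.indicator_of_mem (s := F ⁻¹' {F n}) rfl _).trans (hgF.extend_apply 0 n)).symm

lemma ruRep_of_hasSum {v : ℝ} {m c : ℕ → ℂ} {h : ℕ → ℕ → ℂ} (hc : Summable fun l => ‖c l‖)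
    (hch : ∀ l n, c l = 0 → h l n = 0) (hh : ∀ l, memru v fun n => h l n / c l)
    (hm : ∀ n, HasSum (fun l => h l n) (m n)) : RuRep v m c fun l n => h l n / c l := by
  refine ⟨hh, hc, fun n => ?_⟩
  simpa only [mul_div_cancel_of_imp' (hch _ n)] using hm n

lemma ruNorm_le {v : ℝ} {m c : ℕ → ℂ} {g : ℕ → ℕ → ℂ} (h : RuRep v m c g) :
    RuNorm v m ≤ ENNReal.ofReal (∑' l, ‖c l‖) :=
  iInf_le_of_le c (iInf_le_of_le g (iInf_le _ h))

end StepFunctions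

section Variation

variable {α E : Type*} [Preorder α] [Norm E] [Sub E]

/-- The sums `∑ |f (j i) - f (j (i - 1))| ^ u` along strings `j` with last entry exactly `a`, so
that a string can be prolonged by any later index. -/
def variationSums (u : ℝ) (f : α → E) (a : α) : Set ℝ≥0∞ :=
  {s | ∃ (N : ℕ) (j : Fin (N + 1) → α), StrictMono j ∧ j (Fin.last N) = a ∧
    ∑ i : Fin N, ENNReal.ofReal ‖f (j i.succ) - f (j i.castSucc)‖ ^ u = s}

/-- The `u`-th power of the `u`-variation of `f` accumulated up to `a`. -/
noncomputable def variationTo (u : ℝ) (f : α → E) (a : α) : ℝ≥0∞ :=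
  sSup (variationSums u f a)

lemma zero_mem_variationSums (u : ℝ) (f : α → E) (a : α) : 0 ∈ variationSums u f a :=
  ⟨0, fun _ => a, Subsingleton.strictMono (α := Fin 1) _, rfl, rfl⟩

lemma strictMono_fin_snoc {N : ℕ} {j : Fin (N + 1) → α} {b : α}
    (hj : StrictMono j) (hb : j (Fin.last N) < b) :
    StrictMono (Fin.snoc j b : Fin (N + 2) → α) := by
  rw [Fin.strictMono_iff_lt_succ]
  refine Fin.lastCases ?_ fun i => ?_
  · simpa only [Fin.succ_last, Fin.snoc_last, Fin.snoc_castSucc] using hb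
  · simpa only [Fin.succ_castSucc, Fin.snoc_castSucc] using hj Fin.castSucc_lt_succ

lemma variationTo_add_le (u : ℝ) (f : α → E) {a b : α} (hab : a < b) :
    variationTo u f a + ENNReal.ofReal ‖f b - f a‖ ^ u ≤ variationTo u f b := by
  rw [variationTo, ENNReal.sSup_add ⟨0, zero_mem_variationSums u f a⟩]
  refine iSup₂_le ?_
  rintro _ ⟨N, j, hj, rfl, rfl⟩
  refine le_sSup ⟨N + 1, Fin.snoc j b, strictMono_fin_snoc hj hab, Fin.snoc_last .., ?_⟩
  simp only [Fin.sum_univ_castSucc, Fin.succ_castSucc, Fin.succ_last, Fin.snoc_castSucc,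
    Fin.snoc_last]

lemma variationTo_le_eVar_rpow {u : ℝ} (hu : 0 < u) (m : ℕ → ℂ) (n : ℕ) :
    variationTo u m n ≤ eVar u m ^ u := by
  refine sSup_le ?_
  rintro _ ⟨N, j, hj, -, rfl⟩
  rw [← ENNReal.rpow_inv_le_iff hu, ← one_div]
  exact le_iSup_of_le N (le_iSup_of_le j (le_iSup_of_le hj le_rfl))

lemma exists_variation_control {u A : ℝ} {m : ℕ → ℂ} (hu : 0 < u) (hA : 0 ≤ A)
    (hm : eVar u m ≤ ENNReal.ofReal A) :
    ∃ V : ℕ → ℝ, (∀ n, V n ∈ Set.Icc 0 (A ^ u)) ∧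
      ∀ k n, k ≤ n → ‖m n - m k‖ ^ u ≤ V n - V k := by
  have variation_le (n : ℕ) : variationTo u m n ≤ ENNReal.ofReal (A ^ u) := by
    rw [← ENNReal.ofReal_rpow_of_nonneg hA hu.le]
    exact (variationTo_le_eVar_rpow hu m n).trans (ENNReal.rpow_le_rpow hm hu.le)
  have variation_ne_top (n : ℕ) : variationTo u m n ≠ ∞ :=
    ne_top_of_le_ne_top ENNReal.ofReal_ne_top (variation_le n)
  refine ⟨fun n => (variationTo u m n).toReal, fun n => ⟨ENNReal.toReal_nonneg,
    ENNReal.toReal_le_of_le_ofReal (by positivity) (variation_le n)⟩, fun k n hkn => ?_⟩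
  obtain rfl | hkn := hkn.eq_or_lt
  · rw [sub_self, sub_self, norm_zero, Real.zero_rpow hu.ne']
  · have superadd := ENNReal.toReal_mono (variation_ne_top n) (variationTo_add_le u m hkn)
    rw [ENNReal.ofReal_rpow_of_nonneg (norm_nonneg _) hu.le,
      ENNReal.toReal_add (variation_ne_top k) ENNReal.ofReal_ne_top,
      ENNReal.toReal_ofReal (by positivity)] at superadd
    linarith

lemma exists_holder_parametrization {u A : ℝ} {m : ℕ → ℂ} (hu : 0 < u) (hA : 0 ≤ A)
    (hm : eVar u m ≤ ENNReal.ofReal A) :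
    ∃ w : ℕ → ℝ, Monotone w ∧ (∀ n, w n ∈ Set.Icc 0 1) ∧
      ∀ k n, ‖m k - m n‖ ≤ A * |w k - w n| ^ (1 / u) := by
  obtain ⟨V, V_mem, V_control⟩ := exists_variation_control hu hA hm
  -- If `A = 0`, the junk quotient `V n / 0 = 0` is harmless because `V n = 0` as well.
  have mul_div_V (n : ℕ) : A ^ u * (V n / A ^ u) = V n :=
    mul_div_cancel_of_imp' fun h => le_antisymm (h ▸ (V_mem n).2) (V_mem n).1
  have w_mono : Monotone fun n => V n / A ^ u := fun k n hkn => by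
    have : 0 ≤ V n - V k := (Real.rpow_nonneg (norm_nonneg _) u).trans (V_control k n hkn)
    dsimp only
    gcongr
    linarith
  refine ⟨fun n => V n / A ^ u, w_mono,
    fun n => ⟨div_nonneg (V_mem n).1 (by positivity),
      div_le_one_of_le₀ (V_mem n).2 (by positivity)⟩, fun k n => ?_⟩
  wlog hkn : n ≤ k generalizing k n
  · rw [norm_sub_rev, abs_sub_comm]
    exact this n k (le_of_not_ge hkn)
  have w_sub_nonneg : 0 ≤ V k / A ^ u - V n / A ^ u := sub_nonneg.2 (w_mono hkn)
  rw [abs_of_nonneg w_sub_nonneg, one_div,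
    ← Real.rpow_le_rpow_iff (norm_nonneg _) (by positivity) hu,
    Real.mul_rpow hA (by positivity), Real.rpow_inv_rpow w_sub_nonneg hu.ne', mul_sub,
    mul_div_V, mul_div_V]
  exact V_control n k hkn

end Variation

section DyadicApproximation

/-- The index `⌊2 ^ l * x⌋` of the dyadic interval of length `2 ^ (-l)` containing `x ≥ 0`. -/
noncomputable def dyadicLevel (l : ℕ) (x : ℝ) : ℕ := ⌊2 ^ l * x⌋₊

lemma dyadicLevel_mono (l : ℕ) : Monotone (dyadicLevel l) := fun _ _ hxy =>
  Nat.floor_mono (by gcongr)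

lemma dyadicLevel_lt {x : ℝ} (hx : x ≤ 1) (l : ℕ) : dyadicLevel l x < 2 ^ (l + 1) := by
  have : dyadicLevel l x ≤ 2 ^ l := Nat.floor_le_of_le <| by
    rw [Nat.cast_pow, Nat.cast_ofNat]
    exact mul_le_of_le_one_right (by positivity) hx
  exact this.trans_lt (Nat.pow_lt_pow_right one_lt_two l.lt_succ_self)

lemma dyadicLevel_succ_div_two (l : ℕ) (x : ℝ) : dyadicLevel (l + 1) x / 2 = dyadicLevel l x := by
  rw [dyadicLevel, dyadicLevel, ← Nat.floor_div_ofNat, pow_succ]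
  congr 1
  ring

lemma dyadicLevel_eq_of_succ_eq {l : ℕ} {x y : ℝ}
    (h : dyadicLevel (l + 1) x = dyadicLevel (l + 1) y) :
    dyadicLevel l x = dyadicLevel l y := by
  rw [← dyadicLevel_succ_div_two, h, dyadicLevel_succ_div_two]

lemma abs_sub_le_of_dyadicLevel_eq {l : ℕ} {x y : ℝ} (hx : 0 ≤ x) (hy : 0 ≤ y)
    (h : dyadicLevel l x = dyadicLevel l y) : |x - y| ≤ (2 ^ l)⁻¹ := by
  have scaled_le : |2 ^ l * x - 2 ^ l * y| ≤ 1 := by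
    refine (Int.abs_sub_lt_one_of_floor_eq_floor ?_).le
    rw [← Int.natCast_floor_eq_floor (by positivity), ← Int.natCast_floor_eq_floor (by positivity)]
    exact congrArg Nat.cast h
  rwa [← mul_sub, abs_mul, abs_of_pos (by positivity), ← le_inv_mul_iff₀ (by positivity),
    mul_one] at scaled_le

variable {α E : Type*} [SeminormedAddCommGroup E] {f : α → E} {w : α → ℝ} {A β : ℝ}

lemma norm_sub_le_of_dyadicLevel_eq (hA : 0 ≤ A) (hβ : 0 ≤ β) (hw : ∀ a, 0 ≤ w a)
    (hf : ∀ a b, ‖f a - f b‖ ≤ A * |w a - w b| ^ β) {l : ℕ} {a b : α}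
    (h : dyadicLevel l (w a) = dyadicLevel l (w b)) : ‖f a - f b‖ ≤ A * (2 ^ (-β)) ^ l :=
  calc ‖f a - f b‖ ≤ A * |w a - w b| ^ β := hf a b
    _ ≤ A * ((2 ^ l)⁻¹) ^ β := by
      gcongr
      exact abs_sub_le_of_dyadicLevel_eq (hw a) (hw b) h
    _ = A * (2 ^ (-β)) ^ l := by
      rw [← inv_pow, ← Real.rpow_pow_comm (by norm_num), Real.inv_rpow zero_le_two,
        Real.rpow_neg zero_le_two]

variable [Nonempty α]

/-- A point of the fibre of `dyadicLevel l ∘ w` through `a`, the same one for the whole fibre, at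
which a function is frozen to approximate it at scale `2 ^ (-l)`. -/
noncomputable def dyadicRep (w : α → ℝ) (l : ℕ) (a : α) : α :=
  Function.invFun (dyadicLevel l ∘ w) (dyadicLevel l (w a))

/-- The increments of the dyadic approximations `f ∘ dyadicRep w l` of `f`, the approximation
preceding `l = 0` being `0`. -/
noncomputable def dyadicPiece (f : α → E) (w : α → ℝ) : ℕ → α → E
  | 0, a => f (dyadicRep w 0 a)
  | l + 1, a => f (dyadicRep w (l + 1) a) - f (dyadicRep w l a)

lemma dyadicLevel_dyadicRep (w : α → ℝ) (l : ℕ) (a : α) :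
    dyadicLevel l (w (dyadicRep w l a)) = dyadicLevel l (w a) :=
  Function.invFun_eq (f := dyadicLevel l ∘ w) ⟨a, rfl⟩

lemma dyadicRep_factorsThrough (w : α → ℝ) (l : ℕ) :
    (dyadicRep w l).FactorsThrough (dyadicLevel l ∘ w) := fun _ _ h =>
  congrArg (Function.invFun (dyadicLevel l ∘ w)) h

lemma dyadicPiece_factorsThrough (f : α → E) (w : α → ℝ) (l : ℕ) :
    (dyadicPiece f w l).FactorsThrough (dyadicLevel l ∘ w) := fun a b h => by
  cases l with
  | zero => rw [dyadicPiece, dyadicPiece, dyadicRep_factorsThrough w 0 h]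
  | succ l =>
    rw [dyadicPiece, dyadicPiece, dyadicRep_factorsThrough w (l + 1) h,
      dyadicRep_factorsThrough w l (dyadicLevel_eq_of_succ_eq h)]

lemma sum_range_dyadicPiece (f : α → E) (w : α → ℝ) (l : ℕ) (a : α) :
    ∑ i ∈ Finset.range (l + 1), dyadicPiece f w i a = f (dyadicRep w l a) := by
  induction l with
  | zero => rw [zero_add, Finset.sum_range_one, dyadicPiece]
  | succ l ih => rw [Finset.sum_range_succ, ih, dyadicPiece, add_sub_cancel]

lemma norm_dyadicPiece_le (hβ : 0 ≤ β) (hw : ∀ a, 0 ≤ w a)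
    (hf : ∀ a b, ‖f a - f b‖ ≤ A * |w a - w b| ^ β) (hfA : ∀ a, ‖f a‖ ≤ A) (l : ℕ) (a : α) :
    ‖dyadicPiece f w l a‖ ≤ A * 2 ^ β * (2 ^ (-β)) ^ l := by
  have hA : 0 ≤ A := (norm_nonneg _).trans (hfA a)
  cases l with
  | zero =>
    rw [dyadicPiece, pow_zero, mul_one]
    exact (hfA _).trans (le_mul_of_one_le_right hA (Real.one_le_rpow one_le_two hβ))
  | succ l =>
    have same_level : dyadicLevel l (w (dyadicRep w (l + 1) a)) =
        dyadicLevel l (w (dyadicRep w l a)) := by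
      rw [dyadicLevel_dyadicRep, dyadicLevel_eq_of_succ_eq (dyadicLevel_dyadicRep w (l + 1) a)]
    refine (norm_sub_le_of_dyadicLevel_eq hA hβ hw hf same_level).trans_eq ?_
    rw [pow_succ', mul_assoc, ← mul_assoc (2 ^ β), ← Real.rpow_add two_pos, add_neg_cancel,
      Real.rpow_zero, one_mul]

lemma hasSum_dyadicPiece (hβ : 0 < β) (hw : ∀ a, 0 ≤ w a)
    (hf : ∀ a b, ‖f a - f b‖ ≤ A * |w a - w b| ^ β) (hfA : ∀ a, ‖f a‖ ≤ A) (a : α) :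
    HasSum (fun l => dyadicPiece f w l a) (f a) := by
  have hA : 0 ≤ A := (norm_nonneg _).trans (hfA a)
  have ratio_nonneg : (0 : ℝ) ≤ 2 ^ (-β) := by positivity
  have ratio_lt_one : (2 : ℝ) ^ (-β) < 1 :=
    Real.rpow_lt_one_of_one_lt_of_neg one_lt_two (neg_neg_of_pos hβ)
  have summable_norm : Summable fun l => ‖dyadicPiece f w l a‖ :=
    .of_nonneg_of_le (fun _ => norm_nonneg _) (fun l => norm_dyadicPiece_le hβ.le hw hf hfA l a)
      ((summable_geometric_of_lt_one ratio_nonneg ratio_lt_one).mul_left _)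
  have bound_tendsto : Tendsto (fun l => A * (2 ^ (-β)) ^ l) atTop (𝓝 0) := by
    simpa only [mul_zero] using
      (tendsto_pow_atTop_nhds_zero_of_lt_one ratio_nonneg ratio_lt_one).const_mul A
  refine hasSum_of_subseq_of_summable summable_norm
    (tendsto_finset_range.comp (tendsto_add_atTop_nat 1)) ?_
  simp only [Function.comp_apply, sum_range_dyadicPiece]
  exact tendsto_iff_norm_sub_tendsto_zero.2 <| squeeze_zero (fun _ => norm_nonneg _)
    (fun l => norm_sub_le_of_dyadicLevel_eq hA hβ.le hw hf (dyadicLevel_dyadicRep w l a))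
    bound_tendsto

end DyadicApproximation

section Embedding

/-- The weight of the `l`-th dyadic piece: the quotient of its height `2 ^ (1/u - l/u)` by the
height `2 ^ (-(l + 1)/v)` that an element of `r_v` with `2 ^ (l + 1)` intervals may have. -/
noncomputable def dyadicWeight (u v : ℝ) (l : ℕ) : ℝ :=
  2 ^ (1 / u + 1 / v) * (2 ^ (1 / v - 1 / u)) ^ l

lemma dyadicWeight_pos (u v : ℝ) (l : ℕ) : 0 < dyadicWeight u v l := by
  unfold dyadicWeight
  positivity

lemma summable_dyadicWeight {u v : ℝ} (hu : 0 < u) (huv : u < v) :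
    Summable (dyadicWeight u v) := by
  have ratio_lt_one : (2 : ℝ) ^ (1 / v - 1 / u) < 1 :=
    Real.rpow_lt_one_of_one_lt_of_neg one_lt_two
      (sub_neg.2 (one_div_lt_one_div_of_lt hu huv))
  exact (summable_geometric_of_lt_one (by positivity) ratio_lt_one).mul_left _

lemma norm_mul_dyadicWeight {A : ℝ} (hA : 0 ≤ A) (u v : ℝ) (l : ℕ) :
    ‖((A * dyadicWeight u v l : ℝ) : ℂ)‖ = A * dyadicWeight u v l :=
  Complex.norm_of_nonneg (mul_nonneg hA (dyadicWeight_pos u v l).le)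

lemma dyadicWeight_mul_two_rpow_neg_pow (u v : ℝ) (l : ℕ) :
    dyadicWeight u v l * (2 ^ (-(1 / v))) ^ (l + 1) = 2 ^ (1 / u) * (2 ^ (-(1 / u))) ^ l := by
  simp only [dyadicWeight, ← Real.rpow_mul_natCast zero_le_two, ← Real.rpow_add two_pos]
  congr 1
  push_cast
  ring

lemma two_pow_mul_two_rpow_neg_pow_rpow {v : ℝ} (hv : v ≠ 0) (l : ℕ) :
    (2 : ℝ) ^ l * ((2 ^ (-(1 / v))) ^ l) ^ v = 1 := by
  rw [← Real.rpow_pow_comm (by positivity), ← Real.rpow_mul zero_le_two, ← mul_pow, neg_mul,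
    one_div_mul_cancel hv, Real.rpow_neg_one, mul_inv_cancel₀ two_ne_zero, one_pow]

lemma memru_dyadicPiece_div_dyadicWeight {u v A : ℝ} {m : ℕ → ℂ} {w : ℕ → ℝ}
    (hu : 0 ≤ u) (hv : 0 < v) (hmA : ∀ n, ‖m n‖ ≤ A) (w_mono : Monotone w)
    (w_mem : ∀ n, w n ∈ Set.Icc 0 1)
    (hmw : ∀ k n, ‖m k - m n‖ ≤ A * |w k - w n| ^ (1 / u)) (l : ℕ) :
    memru v fun n => dyadicPiece m w l n / (A * dyadicWeight u v l : ℝ) := by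
  refine memru_of_factorsThrough hv ((dyadicLevel_mono l).comp w_mono)
    (fun n => dyadicLevel_lt (w_mem n).2 l)
    (fun a b h => by rw [dyadicPiece_factorsThrough m w l h]) (fun n => ?_)
    (by exact_mod_cast (two_pow_mul_two_rpow_neg_pow_rpow hv.ne' (l + 1)).le)
  have hA : 0 ≤ A := (norm_nonneg _).trans (hmA 0)
  rw [norm_div, norm_mul_dyadicWeight hA]
  refine div_le_of_le_mul₀ (mul_nonneg hA (dyadicWeight_pos u v l).le) (by positivity) ?_
  rw [mul_comm, mul_assoc, dyadicWeight_mul_two_rpow_neg_pow, ← mul_assoc]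
  exact norm_dyadicPiece_le (by positivity) (fun k => (w_mem k).1) hmw hmA l n

lemma exists_ruRep_dyadicWeight {u v A : ℝ} {m : ℕ → ℂ} (hu : 0 < u) (huv : u < v)
    (hmA : ∀ n, ‖m n‖ ≤ A) (hm : eVar u m ≤ ENNReal.ofReal A) :
    ∃ g, RuRep v m (fun l => (A * dyadicWeight u v l : ℝ)) g := by
  have hA : 0 ≤ A := (norm_nonneg _).trans (hmA 0)
  obtain ⟨w, w_mono, w_mem, hmw⟩ := exists_holder_parametrization hu hA hm
  have w_nonneg (n : ℕ) : 0 ≤ w n := (w_mem n).1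
  have piece_eq_zero (l n : ℕ) (hl : ((A * dyadicWeight u v l : ℝ) : ℂ) = 0) :
      dyadicPiece m w l n = 0 := by
    have A_eq_zero : A = 0 :=
      (mul_eq_zero.1 (Complex.ofReal_eq_zero.1 hl)).resolve_right (dyadicWeight_pos u v l).ne'
    simpa only [A_eq_zero, zero_mul, norm_le_zero_iff] using
      norm_dyadicPiece_le (by positivity) w_nonneg hmw hmA l n
  have summable_norm : Summable fun l => ‖((A * dyadicWeight u v l : ℝ) : ℂ)‖ := by
    simpa only [norm_mul_dyadicWeight hA] using (summable_dyadicWeight hu huv).mul_left A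
  exact ⟨_, ruRep_of_hasSum summable_norm piece_eq_zero
    (memru_dyadicPiece_div_dyadicWeight hu.le (hu.trans huv) hmA w_mono w_mem hmw)
    (hasSum_dyadicPiece (by positivity) w_nonneg hmw hmA)⟩

theorem haar_stmt2_general (u v : ℝ) (hu : 0 < u) (huv : u < v) :
    ∃ C : ℝ, 0 < C ∧ ∀ m : ℕ → ℂ, eVnorm u m < ∞ →
      (∃ c g, RuRep v m c g) ∧ RuNorm v m ≤ ENNReal.ofReal C * eVnorm u m := by
  refine ⟨∑' l, dyadicWeight u v l, (summable_dyadicWeight hu huv).tsum_pos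
    (fun l => (dyadicWeight_pos u v l).le) 0 (dyadicWeight_pos u v 0), fun m hm => ?_⟩
  obtain ⟨A, hA, hmA⟩ : ∃ A : ℝ, 0 ≤ A ∧ eVnorm u m = ENNReal.ofReal A :=
    ⟨_, ENNReal.toReal_nonneg, (ENNReal.ofReal_toReal hm.ne).symm⟩
  have norm_le (n : ℕ) : ‖m n‖ ≤ A := by
    rw [← ENNReal.ofReal_le_ofReal_iff hA, ← hmA]
    exact (le_iSup (fun j => ENNReal.ofReal ‖m j‖) n).trans le_self_add
  obtain ⟨g, hg⟩ := exists_ruRep_dyadicWeight hu huv norm_le (le_add_self.trans_eq hmA)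
  refine ⟨⟨_, g, hg⟩, (ruNorm_le hg).trans_eq ?_⟩
  simp only [norm_mul_dyadicWeight hA]
  rw [tsum_mul_left, mul_comm, ENNReal.ofReal_mul' hA, hmA]

end Embedding

/-- For every `u ≥ 1` and `ε > 0` there is `C = C(u,ε) > 0` such that every
`m : ℕ → ℂ` with `‖m‖_{V_u} < ∞` belongs to `R_{u+ε}` with
`‖m‖_{R_{u+ε}} ≤ C ‖m‖_{V_u}`; in particular `V_u ⊆ R_{u+ε}` continuously. -/
theorem haar_stmt2 (u ε : ℝ) (hu : 1 ≤ u) (hε : 0 < ε) :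
    ∃ C : ℝ, 0 < C ∧ ∀ m : ℕ → ℂ, eVnorm u m < ∞ →
      (∃ c g, RuRep (u + ε) m c g) ∧
      RuNorm (u + ε) m ≤ ENNReal.ofReal C * eVnorm u m :=
  haar_stmt2_general u (u + ε) (by linarith) (by linarith)
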